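/- Objective bound under a fixed indicator for the cardinality-constrained relaxation: suppose (x*, t*, z*) is an optimal solution attaining η_CC and let α and δ be defined from x*. Fix an index j. If δ_j ≤ δ_{[k+1]}, then every (x, t, z) feasible for the conic relaxation (t_l ≥ 0, z ∈ [0,1]^n, Σ_{l=1}^n z_l ≤ k, x_l² ≤ z_l t_l for all l) with z_j = 1 satisfies L(x) + (1/γ) Σ_{l=1}^n t_l ≥ η_CC + γ(δ_{[k]} − δ_j). Symmetrically, if δ_j ≥ δ_{[k]}, then every such feasible (x, t, z) with z_j = 0 satisfies L(x) + (1/γ) Σ_{l=1}^n t_l ≥ η_CC + γ(δ_j − δ_{[k+1]}). -/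

import Mathlib

/-- The logistic loss `L(x) = (1/m) ∑ᵢ log (1 + exp (-yᵢ (A x)ᵢ))`. -/
noncomputable def logLoss (m n : ℕ) (A : Fin m → Fin n → ℝ) (y : Fin m → ℝ)
    (x : Fin n → ℝ) : ℝ :=
  (1 / (m : ℝ)) * ∑ i, Real.log (1 + Real.exp (-(y i) * ∑ j, A i j * x j))

/-!
Since the feasible set is convex, a minimiser also minimises the linearised objective
`∇L(x*) · x + (1/γ) ∑ tₗ`. There the coordinates separate: for a given `z` the optimal value is
`-γ ∑ δₗ zₗ`, by AM-GM on the cone `xₗ² ≤ zₗ tₗ`, so under the cardinality constraint the minimum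
is `-γ` times the sum of the `k` largest `δₗ`. Fixing `z j` at `1` (resp. `0`) costs at least the
exchange of `δ j` with `δ_[k]` (resp. `δ_[k+1]`), and the tangent inequality for the convex loss
transfers that cost back to the original objective.
-/

open scoped Finset

section FirstOrder

variable {E : Type*} [NormedAddCommGroup E] [NormedSpace ℝ E] {f : E → ℝ} {f' : E →L[ℝ] ℝ}
  {s : Set E} {a b : E}

lemma add_apply_sub_le_of_convexOn_of_hasFDerivAt (hf : ConvexOn ℝ s f) (ha : a ∈ s) (hb : b ∈ s)
    (hf' : HasFDerivAt f f' a) : f a + f' (b - a) ≤ f b := by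
  let ℓ : ℝ →ᵃ[ℝ] E := AffineMap.lineMap a b
  have hderiv : HasDerivAt (f ∘ ℓ) (f' (b - a)) 0 :=
    HasFDerivAt.comp_hasDerivAt 0 (by simpa [ℓ] using hf') AffineMap.hasDerivAt_lineMap
  have hslope := (hf.comp_affineMap ℓ).le_slope_of_hasDerivAt (x := 0) (y := 1)
    (by simpa [ℓ] using ha) (by simpa [ℓ] using hb) one_pos hderiv
  simp only [slope_def_field, Function.comp_apply, ℓ, AffineMap.lineMap_apply_zero,
    AffineMap.lineMap_apply_one, sub_zero, div_one] at hslope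
  linarith

lemma isMinOn_fderiv_of_isMinOn (hs : Convex ℝ s) (ha : a ∈ s) (hmin : IsMinOn f s a)
    (hf' : HasFDerivAt f f' a) : IsMinOn f' s a := isMinOn_iff.2 fun b hb => by
  have := hmin.localize.hasFDerivWithinAt_nonneg hf'.hasFDerivWithinAt
    (sub_mem_posTangentConeAt_of_segment_subset (hs.segment_subset ha hb))
  simpa only [map_sub, sub_nonneg] using this

end FirstOrder

section ConicRelaxation

variable {ι : Type*} [Fintype ι]

/-- The feasible set of the cardinality-constrained conic relaxation; its points are triples
`(x, t, z)`. -/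
def conicRelaxation (ι : Type*) [Fintype ι] (k : ℝ) : Set ((ι → ℝ) × (ι → ℝ) × (ι → ℝ)) :=
  {w | (∀ l, 0 ≤ w.2.1 l) ∧ (∀ l, 0 ≤ w.2.2 l ∧ w.2.2 l ≤ 1) ∧ ∑ l, w.2.2 l ≤ k ∧
    ∀ l, w.1 l ^ 2 ≤ w.2.2 l * w.2.1 l}

/-- The objective `f(x) + (1/γ) ∑ₗ tₗ` of the conic relaxation for a general loss `f`; taking for
`f` the derivative of a loss gives the linearised objective. -/
noncomputable def conicObjective (f : (ι → ℝ) → ℝ) (γ : ℝ)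
    (w : (ι → ℝ) × (ι → ℝ) × (ι → ℝ)) : ℝ :=
  f w.1 + (1 / γ) * ∑ l, w.2.1 l

/-- The vector `δ` of the paper, a quarter of the squared partial derivatives of a loss with
derivative `f'`. -/
noncomputable def gradWeight [DecidableEq ι] (f' : (ι → ℝ) →L[ℝ] ℝ) (l : ι) : ℝ :=
  (1 / 4) * f' (Pi.single l 1) ^ 2

lemma two_mul_mul_le_of_sq_le_mul {x z t x' z' t' : ℝ} (hz : 0 ≤ z) (ht : 0 ≤ t) (hz' : 0 ≤ z')
    (ht' : 0 ≤ t') (h : x ^ 2 ≤ z * t) (h' : x' ^ 2 ≤ z' * t') :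
    2 * (x * x') ≤ z * t' + z' * t := by
  refine le_of_sq_le_sq ?_ (by positivity)
  calc (2 * (x * x')) ^ 2 = 4 * (x ^ 2 * x' ^ 2) := by ring
    _ ≤ 4 * ((z * t) * (z' * t')) := by gcongr
    _ = 4 * (z * t') * (z' * t) := by ring
    _ ≤ (z * t' + z' * t) ^ 2 := four_mul_le_sq_add _ _

lemma convex_conicRelaxation (k : ℝ) : Convex ℝ (conicRelaxation ι k) := by
  rintro ⟨x, t, z⟩ ⟨ht, hz, hcard, hcone⟩ ⟨x', t', z'⟩ ⟨ht', hz', hcard', hcone'⟩ a b ha hb hab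
  dsimp only at ht hz hcard hcone ht' hz' hcard' hcone'
  refine ⟨fun l => ?_, fun l => ?_, ?_, fun l => ?_⟩ <;>
    simp only [Prod.smul_mk, Prod.mk_add_mk, Pi.add_apply, Pi.smul_apply, smul_eq_mul]
  · exact convex_Ici (0 : ℝ) (ht l) (ht' l) ha hb hab
  · exact convex_Icc (0 : ℝ) 1 (hz l) (hz' l) ha hb hab
  · rw [Finset.sum_add_distrib, ← Finset.mul_sum, ← Finset.mul_sum]
    exact convex_Iic k hcard hcard' ha hb hab
  · have hcross := two_mul_mul_le_of_sq_le_mul (hz l).1 (ht l) (hz' l).1 (ht' l) (hcone l)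
      (hcone' l)
    calc (a * x l + b * x' l) ^ 2
        = a ^ 2 * x l ^ 2 + a * b * (2 * (x l * x' l)) + b ^ 2 * x' l ^ 2 := by ring
      _ ≤ a ^ 2 * (z l * t l) + a * b * (z l * t' l + z' l * t l) + b ^ 2 * (z' l * t' l) := by
          gcongr
          exacts [hcone l, hcone' l]
      _ = (a * z l + b * z' l) * (a * t l + b * t' l) := by ring

lemma isMinOn_conicObjective_fderiv {f : (ι → ℝ) → ℝ} {f' : (ι → ℝ) →L[ℝ] ℝ} {γ k : ℝ}
    {w₀ : (ι → ℝ) × (ι → ℝ) × (ι → ℝ)} (hf' : HasFDerivAt f f' w₀.1)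
    (hw₀ : w₀ ∈ conicRelaxation ι k)
    (hmin : IsMinOn (conicObjective f γ) (conicRelaxation ι k) w₀) :
    IsMinOn (conicObjective f' γ) (conicRelaxation ι k) w₀ := by
  let penalty : ((ι → ℝ) × (ι → ℝ) × (ι → ℝ)) →L[ℝ] ℝ :=
    (1 / γ) • ∑ l, .comp (.proj l) (.comp (.fst ℝ _ _) (.snd ℝ _ _))
  have hpenalty (g : (ι → ℝ) → ℝ) : conicObjective g γ = fun w => g w.1 + penalty w := by
    funext w
    simp [conicObjective, penalty]
  have hderiv : HasFDerivAt (conicObjective f γ) (f'.comp (.fst ℝ _ _) + penalty) w₀ := by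
    rw [hpenalty]
    exact (hf'.comp w₀ hasFDerivAt_fst).add penalty.hasFDerivAt
  rw [hpenalty f']
  exact isMinOn_fderiv_of_isMinOn (convex_conicRelaxation k) hw₀ hmin hderiv

lemma neg_mul_le_mul_add_of_sq_le_mul {x z t γ : ℝ} (hγ : 0 < γ) (hz : 0 ≤ z) (ht : 0 ≤ t)
    (h : x ^ 2 ≤ z * t) (g : ℝ) : -(γ * ((1 / 4) * g ^ 2 * z)) ≤ g * x + (1 / γ) * t := by
  suffices -(g * x) ≤ γ * ((1 / 4) * g ^ 2 * z) + (1 / γ) * t by linarith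
  refine le_of_sq_le_sq ?_ (by positivity)
  calc (-(g * x)) ^ 2 = g ^ 2 * x ^ 2 := by ring
    _ ≤ g ^ 2 * (z * t) := by gcongr
    _ = 4 * (γ * ((1 / 4) * g ^ 2 * z)) * ((1 / γ) * t) := by field_simp
    _ ≤ (γ * ((1 / 4) * g ^ 2 * z) + (1 / γ) * t) ^ 2 := four_mul_le_sq_add _ _

variable [DecidableEq ι]

lemma apply_eq_sum_single_mul (f' : (ι → ℝ) →L[ℝ] ℝ) (x : ι → ℝ) :
    f' x = ∑ l, f' (Pi.single l 1) * x l := by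
  conv_lhs => rw [← Finset.univ_sum_single x, map_sum]
  refine Finset.sum_congr rfl fun l _ => ?_
  have hsingle : Pi.single l (x l) = x l • Pi.single l (1 : ℝ) := by
    rw [← Pi.single_smul', smul_eq_mul, mul_one]
  rw [hsingle, map_smul, smul_eq_mul, mul_comm]

lemma neg_mul_sum_gradWeight_le_conicObjective {γ k : ℝ} (hγ : 0 < γ) (f' : (ι → ℝ) →L[ℝ] ℝ)
    {w : (ι → ℝ) × (ι → ℝ) × (ι → ℝ)} (hw : w ∈ conicRelaxation ι k) :
    -(γ * ∑ l, gradWeight f' l * w.2.2 l) ≤ conicObjective f' γ w := by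
  obtain ⟨ht, hz, -, hcone⟩ := hw
  rw [conicObjective, apply_eq_sum_single_mul, Finset.mul_sum, Finset.mul_sum,
    ← Finset.sum_neg_distrib, ← Finset.sum_add_distrib]
  exact Finset.sum_le_sum fun l _ =>
    neg_mul_le_mul_add_of_sq_le_mul hγ (hz l).1 (ht l) (hcone l) _

lemma exists_mem_conicRelaxation_conicObjective_eq {γ : ℝ} (hγ : γ ≠ 0)
    (f' : (ι → ℝ) →L[ℝ] ℝ) (S : Finset ι) :
    ∃ w ∈ conicRelaxation ι (#S), conicObjective f' γ w = -(γ * ∑ l ∈ S, gradWeight f' l) := by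
  let g (l : ι) : ℝ := f' (Pi.single l 1)
  -- The minimiser of the separated objective `g l * x + x ^ 2 / γ`.
  let x (l : ι) : ℝ := -(γ * g l / 2)
  refine ⟨(fun l => if l ∈ S then x l else 0, fun l => if l ∈ S then x l ^ 2 else 0,
    fun l => if l ∈ S then 1 else 0), ⟨fun l => ?_, fun l => ?_, ?_, fun l => ?_⟩, ?_⟩
  · dsimp only
    split_ifs <;> positivity
  · dsimp only
    split_ifs <;> norm_num
  · simp
  · dsimp only
    split_ifs <;> simp
  · simp only [conicObjective, apply_eq_sum_single_mul f' fun _ => ite _ _ _, mul_ite, mul_zero,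
      Finset.sum_ite_mem, Finset.univ_inter, Finset.mul_sum, ← Finset.sum_add_distrib,
      ← Finset.sum_neg_distrib]
    refine Finset.sum_congr rfl fun l _ => ?_
    simp only [x, g, gradWeight]
    field_simp
    ring

end ConicRelaxation

section Threshold

variable {ι : Type*} {δ : ι → ℝ} {θ : ℝ}

lemma sum_mul_le_sum_add_of_threshold [Fintype ι] {z : ι → ℝ} {S : Finset ι}
    (hS : ∀ l ∈ S, θ ≤ δ l) (hSc : ∀ l ∉ S, δ l ≤ θ) (hz : ∀ l, 0 ≤ z l ∧ z l ≤ 1) :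
    ∑ l, δ l * z l ≤ ∑ l ∈ S, δ l + θ * (∑ l, z l - #S) := by
  classical
  have hexcess : ∑ l, (δ l - θ) * z l ≤ ∑ l ∈ S, (δ l - θ) := by
    rw [← Finset.univ_inter S, ← Finset.sum_ite_mem]
    refine Finset.sum_le_sum fun l _ => ?_
    split_ifs with hl
    · exact mul_le_of_le_one_right (sub_nonneg.2 (hS l hl)) (hz l).2
    · exact mul_nonpos_of_nonpos_of_nonneg (sub_nonpos.2 (hSc l hl)) (hz l).1
  simp only [sub_mul, Finset.sum_sub_distrib, ← Finset.mul_sum, Finset.sum_const,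
    nsmul_eq_mul] at hexcess
  linarith

lemma sum_mul_add_exchange_le_sum_of_threshold [Fintype ι] {z : ι → ℝ} {S : Finset ι}
    (hθ : 0 ≤ θ) (hS : ∀ l ∈ S, θ ≤ δ l) (hSc : ∀ l ∉ S, δ l ≤ θ)
    (hz : ∀ l, 0 ≤ z l ∧ z l ≤ 1) (hcard : ∑ l, z l ≤ #S) (j : ι) {u : ℝ}
    (hu : 0 ≤ u ∧ u ≤ 1) :
    ∑ l, δ l * z l + (δ j - θ) * (u - z j) ≤ ∑ l ∈ S, δ l := by
  classical
  have hupdate (c : ι → ℝ) :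
      ∑ l, c l * Function.update z j u l = ∑ l, c l * z l + c j * (u - z j) := by
    have hupd : Function.update z j u = z + Pi.single j (u - z j) := by
      funext l
      rcases eq_or_ne l j with rfl | hl <;> simp [*]
    simp [hupd, mul_add, Finset.sum_add_distrib, Pi.single_apply]
  have hbound := sum_mul_le_sum_add_of_threshold (z := Function.update z j u) hS hSc
    ((Function.forall_update_iff z fun _ v => 0 ≤ v ∧ v ≤ 1).2 ⟨hu, fun l _ => hz l⟩)
  have hsum := hupdate 1
  simp only [Pi.one_apply, one_mul] at hsum
  rw [hupdate, hsum] at hbound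
  linarith [mul_le_mul_of_nonneg_left hcard hθ]

variable {n : ℕ} {σ : Fin n ≃ ι} {k q : Fin n}

lemma threshold_of_antitone_of_wcovBy (hσ : Antitone (δ ∘ σ)) (hqk : q ⩿ k) :
    (∀ l ∈ (Finset.Iio k).map σ.toEmbedding, δ (σ q) ≤ δ l) ∧
      ∀ l ∉ (Finset.Iio k).map σ.toEmbedding, δ l ≤ δ (σ q) := by
  constructor <;> intro l hl <;> obtain ⟨i, rfl⟩ := σ.surjective l <;>
    simp only [Finset.mem_map_equiv, Equiv.symm_apply_apply, Finset.mem_Iio, not_lt] at hl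
  · exact hσ (hqk.le_of_lt hl)
  · exact hσ (hqk.le.trans hl)

end Threshold

section ObjectiveBound

variable {ι : Type*} [Fintype ι] [DecidableEq ι] {f : (ι → ℝ) → ℝ} {f' : (ι → ℝ) →L[ℝ] ℝ}
  {γ : ℝ} {w₀ w : (ι → ℝ) × (ι → ℝ) × (ι → ℝ)}

lemma conicObjective_add_exchange_le_of_threshold (hγ : 0 < γ) (hf : ConvexOn ℝ Set.univ f)
    (hf' : HasFDerivAt f f' w₀.1) {S : Finset ι} (hw₀ : w₀ ∈ conicRelaxation ι (#S))
    (hmin : IsMinOn (conicObjective f γ) (conicRelaxation ι (#S)) w₀) {θ : ℝ} (hθ : 0 ≤ θ)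
    (hS : ∀ l ∈ S, θ ≤ gradWeight f' l) (hSc : ∀ l ∉ S, gradWeight f' l ≤ θ)
    (hw : w ∈ conicRelaxation ι (#S)) (j : ι) {u : ℝ} (hu : 0 ≤ u ∧ u ≤ 1) :
    conicObjective f γ w₀ + γ * ((gradWeight f' j - θ) * (u - w.2.2 j)) ≤
      conicObjective f γ w := by
  have hopt : conicObjective f' γ w₀ ≤ -(γ * ∑ l ∈ S, gradWeight f' l) := by
    obtain ⟨v, hv, hval⟩ := exists_mem_conicRelaxation_conicObjective_eq hγ.ne' f' S
    exact hval ▸ isMinOn_iff.1 (isMinOn_conicObjective_fderiv hf' hw₀ hmin) v hv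
  have hexchange : γ * (∑ l, gradWeight f' l * w.2.2 l +
      (gradWeight f' j - θ) * (u - w.2.2 j)) ≤ γ * ∑ l ∈ S, gradWeight f' l :=
    mul_le_mul_of_nonneg_left
      (sum_mul_add_exchange_le_sum_of_threshold hθ hS hSc hw.2.1 hw.2.2.1 j hu) hγ.le
  have hlin := neg_mul_sum_gradWeight_le_conicObjective hγ f' hw
  have htangent := add_apply_sub_le_of_convexOn_of_hasFDerivAt hf (Set.mem_univ _)
    (Set.mem_univ w.1) hf'
  rw [map_sub] at htangent
  simp only [conicObjective] at hopt hlin ⊢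
  linarith

/-- Positions in the sorted order count from `0`: with `k` the cardinality bound and `p` its
predecessor, `δ (σ p)` is `δ_[k]` and `δ (σ k)` is `δ_[k+1]`. -/
theorem objective_bound_fixed_indicator_CARD_general {n : ℕ} {p k : Fin n} (hpk : p ⋖ k)
    (hγ : 0 < γ) (hf : ConvexOn ℝ Set.univ f) (hf' : HasFDerivAt f f' w₀.1)
    (hw₀ : w₀ ∈ conicRelaxation ι (k : ℕ))
    (hmin : IsMinOn (conicObjective f γ) (conicRelaxation ι (k : ℕ)) w₀)
    {σ : Fin n ≃ ι} (hσ : Antitone (gradWeight f' ∘ σ)) (j : ι) :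
    ∀ w ∈ conicRelaxation ι (k : ℕ),
      (w.2.2 j = 1 → conicObjective f γ w₀ + γ * (gradWeight f' (σ p) - gradWeight f' j) ≤
        conicObjective f γ w) ∧
      (w.2.2 j = 0 → conicObjective f γ w₀ + γ * (gradWeight f' j - gradWeight f' (σ k)) ≤
        conicObjective f γ w) := by
  intro w hw
  have hbound (q : Fin n) (hqk : q ⩿ k) {u : ℝ} (hu : 0 ≤ u ∧ u ≤ 1) :
      conicObjective f γ w₀ + γ * ((gradWeight f' j - gradWeight f' (σ q)) * (u - w.2.2 j)) ≤
        conicObjective f γ w := by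
    have hcard : #((Finset.Iio k).map σ.toEmbedding) = (k : ℕ) := by
      rw [Finset.card_map, Fin.card_Iio]
    obtain ⟨hS, hSc⟩ := threshold_of_antitone_of_wcovBy hσ hqk
    rw [← hcard] at hw₀ hmin hw
    exact conicObjective_add_exchange_le_of_threshold hγ hf hf' hw₀ hmin
      (by unfold gradWeight; positivity) hS hSc hw j hu
  constructor <;> intro hj
  · simpa [hj] using hbound p hpk.wcovBy (u := 0) (by norm_num)
  · simpa [hj] using hbound k .rfl (u := 1) (by norm_num)

end ObjectiveBound

section LogisticLoss

open Real

lemma hasDerivAt_log_one_add_exp (v : ℝ) :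
    HasDerivAt (fun v => log (1 + exp v)) (sigmoid v) v := by
  convert ((hasDerivAt_exp v).const_add 1).log (by positivity) using 1
  rw [sigmoid_def, exp_neg]
  field_simp
  ring

lemma convexOn_log_one_add_exp : ConvexOn ℝ Set.univ fun v => log (1 + exp v) := by
  refine Monotone.convexOn_univ_of_deriv
    (fun v => (hasDerivAt_log_one_add_exp v).differentiableAt) ?_
  rw [funext fun v => (hasDerivAt_log_one_add_exp v).deriv]
  exact sigmoid_monotone

variable (m n : ℕ) (A : Fin m → Fin n → ℝ) (y : Fin m → ℝ)

lemma convexOn_logLoss : ConvexOn ℝ Set.univ (logLoss m n A y) := by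
  let margin (i : Fin m) : (Fin n → ℝ) →ₗ[ℝ] ℝ := -(y i) • ∑ j, A i j • LinearMap.proj j
  have hterm (i : Fin m) : ConvexOn ℝ Set.univ
      fun x : Fin n → ℝ => log (1 + exp (-(y i) * ∑ j, A i j * x j)) := by
    simpa [margin, Function.comp_def] using convexOn_log_one_add_exp.comp_linearMap (margin i)
  have hsum := Finset.sum_induction (s := Finset.univ) _ (ConvexOn ℝ Set.univ)
    (fun _ _ => ConvexOn.add) (convexOn_const 0 convex_univ) fun i _ => hterm i
  rw [Finset.sum_fn] at hsum
  exact hsum.smul (by positivity)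

/-- The dual vector `α` attached to the point `x`: `-α i` is the derivative of the loss with
respect to the `i`-th prediction `(A x)ᵢ`. -/
noncomputable def logLossDual (x : Fin n → ℝ) (i : Fin m) : ℝ :=
  y i / ((m : ℝ) * (1 + exp (y i * ∑ j, A i j * x j)))

/-- The derivative of the logistic loss at `x`, as the linear form `-∑ᵢ αᵢ (A ·)ᵢ`. -/
noncomputable def logLossFDeriv (x : Fin n → ℝ) : (Fin n → ℝ) →L[ℝ] ℝ :=
  ∑ i, -logLossDual m n A y x i • ∑ j, A i j • ContinuousLinearMap.proj j

lemma hasFDerivAt_logLoss (x : Fin n → ℝ) :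
    HasFDerivAt (logLoss m n A y) (logLossFDeriv m n A y x) x := by
  have hpred (i : Fin m) : HasFDerivAt (fun x : Fin n → ℝ => -(y i) * ∑ j, A i j * x j)
      (-(y i) • ∑ j, A i j • ContinuousLinearMap.proj (R := ℝ) j) x :=
    (HasFDerivAt.fun_sum fun j _ => (hasFDerivAt_apply j x).const_mul (A i j)).const_mul _
  refine ((HasFDerivAt.fun_sum fun i _ => (hasDerivAt_log_one_add_exp _).comp_hasFDerivAt x
    (hpred i)).const_mul (1 / (m : ℝ))).congr_fderiv ?_
  rw [Finset.smul_sum, logLossFDeriv]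
  refine Finset.sum_congr rfl fun i _ => ?_
  rw [smul_smul, smul_smul, logLossDual, sigmoid_def, neg_mul, neg_neg, div_eq_mul_inv (y i),
    mul_inv]
  congr 1
  ring

lemma gradWeight_logLossFDeriv (x : Fin n → ℝ) (l : Fin n) :
    gradWeight (logLossFDeriv m n A y x) l =
      (1 / 4) * (∑ i, logLossDual m n A y x i * A i l) ^ 2 := by
  simp [gradWeight, logLossFDeriv, Pi.single_apply]

end LogisticLoss

/-- Objective bound under a fixed indicator for the cardinality-constrained relaxation:
if `(xs, ts, zs)` is an optimal solution attaining `ηCC` and `α`, `δ` are defined from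
`xs` (the permutation `σ` sorts `δ` in nonincreasing order, so `δ (σ ⟨k-1,_⟩) = δ_[k]`
and `δ (σ ⟨k,_⟩) = δ_[k+1]`), then for a fixed index `j`: if `δ_j ≤ δ_[k+1]`, every
feasible `(x, t, z)` of the conic relaxation with `z j = 1` has objective at least
`ηCC + γ (δ_[k] - δ_j)`; if `δ_j ≥ δ_[k]`, every feasible `(x, t, z)` with `z j = 0`
has objective at least `ηCC + γ (δ_j - δ_[k+1])`. -/
theorem objective_bound_fixed_indicator_CARD
    (m n : ℕ) (hm : 0 < m) (hn : 0 < n)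
    (A : Fin m → Fin n → ℝ) (y : Fin m → ℝ) (hy : ∀ i, y i = 1 ∨ y i = -1)
    (γ : ℝ) (hγ : 0 < γ)
    (k : ℕ) (hk : 1 ≤ k) (hkn : k < n)
    -- (xs, ts, zs) is an optimal solution of the conic relaxation attaining ηCC
    (xs ts zs : Fin n → ℝ)
    (hts : ∀ l, 0 ≤ ts l) (hzs : ∀ l, 0 ≤ zs l ∧ zs l ≤ 1)
    (hcard_s : ∑ l, zs l ≤ (k : ℝ))
    (hcone_s : ∀ l, (xs l) ^ 2 ≤ zs l * ts l)
    (hopt : ∀ x t z : Fin n → ℝ, (∀ l, 0 ≤ t l) → (∀ l, 0 ≤ z l ∧ z l ≤ 1) →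
      (∑ l, z l ≤ (k : ℝ)) → (∀ l, (x l) ^ 2 ≤ z l * t l) →
      logLoss m n A y xs + (1 / γ) * ∑ l, ts l ≤
        logLoss m n A y x + (1 / γ) * ∑ l, t l)
    (ηCC : ℝ)
    (hηCC : ηCC = logLoss m n A y xs + (1 / γ) * ∑ l, ts l)
    -- dual quantities defined from xs
    (α : Fin m → ℝ)
    (hα : ∀ i, α i = y i / ((m : ℝ) * (1 + Real.exp (y i * ∑ j, A i j * xs j))))
    (δ : Fin n → ℝ)
    (hδ : ∀ l, δ l = (1 / 4) * (∑ i, α i * A i l) ^ 2)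
    -- σ sorts δ in nonincreasing order
    (σ : Equiv.Perm (Fin n)) (hσ : ∀ i j : Fin n, i ≤ j → δ (σ j) ≤ δ (σ i))
    (j : Fin n) :
    (δ j ≤ δ (σ ⟨k, hkn⟩) →
      ∀ x t z : Fin n → ℝ, (∀ l, 0 ≤ t l) → (∀ l, 0 ≤ z l ∧ z l ≤ 1) →
        (∑ l, z l ≤ (k : ℝ)) → (∀ l, (x l) ^ 2 ≤ z l * t l) → z j = 1 →
        ηCC + γ * (δ (σ ⟨k - 1, by omega⟩) - δ j) ≤
          logLoss m n A y x + (1 / γ) * ∑ l, t l) ∧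
    (δ (σ ⟨k - 1, by omega⟩) ≤ δ j →
      ∀ x t z : Fin n → ℝ, (∀ l, 0 ≤ t l) → (∀ l, 0 ≤ z l ∧ z l ≤ 1) →
        (∑ l, z l ≤ (k : ℝ)) → (∀ l, (x l) ^ 2 ≤ z l * t l) → z j = 0 →
        ηCC + γ * (δ j - δ (σ ⟨k, hkn⟩)) ≤
          logLoss m n A y x + (1 / γ) * ∑ l, t l) := by
  obtain rfl : α = logLossDual m n A y xs := funext hα
  obtain rfl : δ = gradWeight (logLossFDeriv m n A y xs) :=
    funext fun l => (hδ l).trans (gradWeight_logLossFDeriv m n A y xs l).symm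
  subst hηCC
  have hbound := objective_bound_fixed_indicator_CARD_general (w₀ := (xs, ts, zs))
    (p := ⟨k - 1, by omega⟩) (k := ⟨k, hkn⟩) (by simp [hk]) hγ (convexOn_logLoss m n A y)
    (hasFDerivAt_logLoss m n A y xs) ⟨hts, hzs, hcard_s, hcone_s⟩
    (isMinOn_iff.2 fun w ⟨ht, hz, hcard, hcone⟩ => hopt w.1 w.2.1 w.2.2 ht hz hcard hcone)
    (fun i j => hσ i j) j
  exact ⟨fun _ x t z ht hz hcard hcone => (hbound (x, t, z) ⟨ht, hz, hcard, hcone⟩).1,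
    fun _ x t z ht hz hcard hcone => (hbound (x, t, z) ⟨ht, hz, hcard, hcone⟩).2⟩
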